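/- (Asymptotics of the same-mode quadratic kernel) For every κ ∈ ℝ and all j, σ ∈ {1, −1} there exists C > 0 such that for every k ∈ ℝ one has |ζ^σ_{j,j}(k, κ, k−κ) − 2σ·q̂(κ)| ≤ C/(1+k²). In particular ζ^σ_{j,j}(k, κ, k−κ) → 2σ·q̂(κ) as |k| → ∞, with error of order O(|k|⁻²). -/

import Mathlib

noncomputable def qhat (k : ℝ) : ℝ := Real.sqrt ((2 + k ^ 2) / (1 + k ^ 2))

/-- The quadratic interaction kernel ζ^σ_{j,p}(k, κ, m) of the diagonalized
ion Euler–Poisson system. -/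
noncomputable def ζ (σ j p : ℝ) (k κ m : ℝ) : ℝ :=
  p * qhat m + σ * qhat κ + σ * (j * p / qhat k) * qhat κ * qhat m
    - j / qhat k - j / (qhat k * (1 + k ^ 2) * (1 + κ ^ 2) * (1 + m ^ 2))

/-
As `q̂(k)² - 1 = 1 / (1 + k²)` and `q̂ ≥ 1`, both `q̂(k)` and `1 / q̂(k)` are `1 + O(1 / (1 + k²))`,
and Peetre's inequality keeps this error order under the translation `k ↦ k - κ`. Replacing every
`q̂` that depends on `k` by `1` turns `ζ^σ_{j,p}(k, κ, k - κ)`, for arbitrary real `j`, `p`, `σ`,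
into `p - j + σ (1 + j p) q̂(κ)`, which is `2 σ q̂(κ)` when `p = j = ±1`. All estimates are
uniform in `k ∈ ℝ`, that is, big-O along the filter `⊤`.
-/

open Asymptotics Filter

lemma one_add_add_sq_le {R : Type*} [CommRing R] [LinearOrder R] [IsStrictOrderedRing R]
    (x y : R) : 1 + (x + y) ^ 2 ≤ 2 * (1 + x ^ 2) * (1 + y ^ 2) := by
  nlinarith [sq_nonneg (x - y), sq_nonneg (x * y)]

lemma inv_one_add_sub_sq_isBigO (κ : ℝ) :
    (fun k : ℝ => (1 + (k - κ) ^ 2)⁻¹) =O[⊤] fun k => (1 + k ^ 2)⁻¹ := by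
  refine .of_bound (2 * (1 + κ ^ 2)) (.of_forall fun k => ?_)
  have hpeetre := one_add_add_sq_le κ (k - κ)
  rw [add_sub_cancel] at hpeetre
  rw [Real.norm_of_nonneg (by positivity), Real.norm_of_nonneg (by positivity),
    ← div_eq_mul_inv, le_div_iff₀ (by positivity), inv_mul_le_iff₀ (by positivity)]
  linarith

lemma qhat_sq (k : ℝ) : qhat k ^ 2 = 1 + (1 + k ^ 2)⁻¹ := by
  rw [qhat, Real.sq_sqrt (by positivity)]
  field_simp
  ring

lemma one_le_qhat (k : ℝ) : 1 ≤ qhat k := by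
  rw [qhat, Real.one_le_sqrt, one_le_div (by positivity)]
  linarith

lemma qhat_pos (k : ℝ) : 0 < qhat k :=
  zero_lt_one.trans_le (one_le_qhat k)

lemma qhat_sub_one_le (k : ℝ) : qhat k - 1 ≤ (1 + k ^ 2)⁻¹ :=
  calc qhat k - 1 ≤ (qhat k - 1) * (qhat k + 1) :=
        le_mul_of_one_le_right (sub_nonneg.2 (one_le_qhat k)) (by linarith [qhat_pos k])
    _ = qhat k ^ 2 - 1 := by ring
    _ = (1 + k ^ 2)⁻¹ := by rw [qhat_sq, add_sub_cancel_left]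

lemma qhat_sub_one_isBigO : (fun k => qhat k - 1) =O[⊤] fun k => (1 + k ^ 2)⁻¹ := by
  refine .of_norm_le fun k => ?_
  rw [Real.norm_of_nonneg (sub_nonneg.2 (one_le_qhat k))]
  exact qhat_sub_one_le k

lemma qhat_translate_sub_one_isBigO (κ : ℝ) :
    (fun k => qhat (k - κ) - 1) =O[⊤] fun k => (1 + k ^ 2)⁻¹ :=
  (qhat_sub_one_isBigO.comp_tendsto (k := fun k => k - κ) tendsto_top).trans
    (inv_one_add_sub_sq_isBigO κ)

lemma inv_qhat_isBigO_one : (fun k => (qhat k)⁻¹) =O[⊤] fun _ => (1 : ℝ) := by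
  refine .of_norm_le fun k => ?_
  rw [Real.norm_of_nonneg (inv_nonneg.2 (qhat_pos k).le)]
  exact inv_le_one_of_one_le₀ (one_le_qhat k)

lemma qhat_translate_div_qhat_sub_one_isBigO (κ : ℝ) :
    (fun k => qhat (k - κ) / qhat k - 1) =O[⊤] fun k => (1 + k ^ 2)⁻¹ := by
  have hdiff := ((qhat_translate_sub_one_isBigO κ).sub qhat_sub_one_isBigO).mul inv_qhat_isBigO_one
  refine hdiff.congr (fun k => ?_) fun k => mul_one _
  have := (qhat_pos k).ne'
  field_simp
  ring

lemma inv_qhat_sub_one_isBigO :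
    (fun k => (qhat k)⁻¹ - 1) =O[⊤] fun k => (1 + k ^ 2)⁻¹ := by
  refine (qhat_sub_one_isBigO.neg_left.mul inv_qhat_isBigO_one).congr (fun k => ?_)
    fun k => mul_one _
  have := (qhat_pos k).ne'
  field_simp
  ring

lemma one_add_sq_le_qhat_mul (k κ m : ℝ) :
    1 + k ^ 2 ≤ qhat k * (1 + k ^ 2) * (1 + κ ^ 2) * (1 + m ^ 2) := by
  have := qhat_pos k
  calc 1 + k ^ 2 ≤ qhat k * (1 + k ^ 2) :=
        le_mul_of_one_le_left (by positivity) (one_le_qhat k)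
    _ ≤ qhat k * (1 + k ^ 2) * (1 + κ ^ 2) :=
        le_mul_of_one_le_right (by positivity) (le_add_of_nonneg_right (sq_nonneg κ))
    _ ≤ qhat k * (1 + k ^ 2) * (1 + κ ^ 2) * (1 + m ^ 2) :=
        le_mul_of_one_le_right (by positivity) (le_add_of_nonneg_right (sq_nonneg m))

lemma inv_qhat_mul_isBigO (κ : ℝ) (m : ℝ → ℝ) :
    (fun k => (qhat k * (1 + k ^ 2) * (1 + κ ^ 2) * (1 + m k ^ 2))⁻¹)
      =O[⊤] fun k => (1 + k ^ 2)⁻¹ := by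
  refine .of_norm_le fun k => ?_
  have := qhat_pos k
  rw [Real.norm_of_nonneg (by positivity)]
  exact inv_anti₀ (by positivity) (one_add_sq_le_qhat_mul k κ (m k))

lemma ζ_sub_limit_eq (σ j p k κ m : ℝ) :
    ζ σ j p k κ m - (p - j + σ * (1 + j * p) * qhat κ) =
      p * (qhat m - 1) + σ * j * p * qhat κ * (qhat m / qhat k - 1) - j * ((qhat k)⁻¹ - 1)
        - j * (qhat k * (1 + k ^ 2) * (1 + κ ^ 2) * (1 + m ^ 2))⁻¹ := by
  rw [ζ]
  ring

lemma ζ_sub_limit_isBigO (σ j p κ : ℝ) :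
    (fun k => ζ σ j p k κ (k - κ) - (p - j + σ * (1 + j * p) * qhat κ))
      =O[⊤] fun k => (1 + k ^ 2)⁻¹ := by
  simp only [ζ_sub_limit_eq]
  exact ((((qhat_translate_sub_one_isBigO κ).const_mul_left p).add
    ((qhat_translate_div_qhat_sub_one_isBigO κ).const_mul_left (σ * j * p * qhat κ))).sub
    (inv_qhat_sub_one_isBigO.const_mul_left j)).sub
    ((inv_qhat_mul_isBigO κ fun k => k - κ).const_mul_left j)

theorem stmt11_general (κ j p σ : ℝ) :
    ∃ C > (0 : ℝ), ∀ k : ℝ,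
      |ζ σ j p k κ (k - κ) - (p - j + σ * (1 + j * p) * qhat κ)| ≤ C / (1 + k ^ 2) := by
  obtain ⟨C, hC, hbound⟩ := (ζ_sub_limit_isBigO σ j p κ).exists_pos
  refine ⟨C, hC, fun k => (isBigOWith_top.1 hbound k).trans_eq ?_⟩
  rw [Real.norm_of_nonneg (by positivity), div_eq_mul_inv]

theorem stmt11 (κ : ℝ) (j σ : ℝ) (hj : j = 1 ∨ j = -1) (hσ : σ = 1 ∨ σ = -1) :
    ∃ C > (0 : ℝ), ∀ k : ℝ,
      |ζ σ j j k κ (k - κ) - 2 * σ * qhat κ| ≤ C / (1 + k ^ 2) := by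
  have hlimit : j - j + σ * (1 + j * j) * qhat κ = 2 * σ * qhat κ := by
    rw [mul_self_eq_one_iff.2 hj]; ring
  exact hlimit ▸ stmt11_general κ j j σ
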